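/- In the Leech polarization setup, the minimum norm of L(M,N,3) is 6 if there exists a super offender, and is 8 otherwise. -/

import Mathlib

noncomputable section

open scoped RealInnerProductSpace Pointwise
open Module

variable {V : Type*} [NormedAddCommGroup V] [InnerProductSpace ℝ V]

/-- `L` is a (full) lattice in `V`: a finitely generated `ℤ`-submodule spanning `V` over `ℝ`. -/
def IsLat (L : Submodule ℤ V) : Prop :=
  L.FG ∧ Submodule.span ℝ (L : Set V) = ⊤

/-- The lattice `L` is integral: all inner products of lattice vectors are integers. -/
def IsIntegralLat (L : Submodule ℤ V) : Prop :=
  ∀ x ∈ L, ∀ y ∈ L, ∃ n : ℤ, ⟪x, y⟫ = (n : ℝ)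

/-- The lattice `L` is even: it is integral and all norms are even integers. -/
def IsEvenLat (L : Submodule ℤ V) : Prop :=
  IsIntegralLat L ∧ ∀ x ∈ L, ∃ n : ℤ, ⟪x, x⟫ = 2 * (n : ℝ)

/-- The lattice `L` is unimodular: the Gram matrix of some `ℤ`-basis has determinant 1. -/
def IsUnimodularLat (L : Submodule ℤ V) : Prop :=
  ∃ (n : ℕ) (b : Basis (Fin n) ℤ L),
    (Matrix.of fun i j : Fin n => ⟪(b i : V), (b j : V)⟫).det = 1

/-- The minimum norm `μ(L)` of a lattice. -/
def minNorm (L : Submodule ℤ V) : ℝ :=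
  sInf {r : ℝ | ∃ x ∈ L, x ≠ 0 ∧ ⟪x, x⟫ = r}

/-- `√2·Υ` is an even unimodular lattice: all norms of `Υ` are integers, all doubled inner
products are integers, and the Gram matrix of the form `2⟪·,·⟫` on a `ℤ`-basis of `Υ` has
determinant 1. -/
def SqrtTwoEvenUnimod (Υ : Submodule ℤ V) : Prop :=
  (∀ x ∈ Υ, ∃ n : ℤ, ⟪x, x⟫ = (n : ℝ)) ∧
  (∀ x ∈ Υ, ∀ y ∈ Υ, ∃ n : ℤ, 2 * ⟪x, y⟫ = (n : ℝ)) ∧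
  ∃ (n : ℕ) (b : Basis (Fin n) ℤ Υ),
    (Matrix.of fun i j : Fin n => 2 * ⟪(b i : V), (b j : V)⟫).det = 1

/-- `M, N` is a polarization of `Υ`: a pair of integral sublattices with
`M + N = Υ` and `M ∩ N = 2Υ`. -/
def IsPolarization (Υ M N : Submodule ℤ V) : Prop :=
  M ≤ Υ ∧ N ≤ Υ ∧ IsIntegralLat M ∧ IsIntegralLat N ∧ M ⊔ N = Υ ∧ M ⊓ N = (2 : ℤ) • Υ

/-- The sublattice `L_M = {(x_1,…,x_k) ∈ M^k : x_1+⋯+x_k ∈ M ∩ N}` of `V^k`. -/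
def LsubM (M N : Submodule ℤ V) (k : ℕ) : Submodule ℤ (PiLp 2 fun _ : Fin k => V) where
  carrier := {v | (∀ i, v i ∈ M) ∧ (∑ i, v i) ∈ M ⊓ N}
  add_mem' := fun {a b} ha hb =>
    ⟨fun i => M.add_mem (ha.1 i) (hb.1 i), by
      have h : (∑ i, (a + b) i) = (∑ i, a i) + ∑ i, b i :=
        (Finset.sum_congr rfl fun i _ => rfl).trans Finset.sum_add_distrib
      rw [h]; exact (M ⊓ N).add_mem ha.2 hb.2⟩
  zero_mem' := ⟨fun _ => M.zero_mem, by
      have h : (∑ i : Fin k, (0 : PiLp 2 fun _ : Fin k => V) i) = 0 :=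
        Finset.sum_eq_zero fun _ _ => rfl
      rw [h]; exact (M ⊓ N).zero_mem⟩
  smul_mem' := fun c a ha =>
    ⟨fun i => M.smul_mem c (ha.1 i), by
      have h : (∑ i, (c • a) i) = c • ∑ i, a i := by
        show (∑ i, c • a i) = c • ∑ i, a i
        exact Finset.smul_sum.symm
      rw [h]; exact (M ⊓ N).smul_mem c ha.2⟩

/-- The diagonal sublattice `L^N = {(y,…,y) : y ∈ N}` of `V^k`. -/
def LsupN (N : Submodule ℤ V) (k : ℕ) : Submodule ℤ (PiLp 2 fun _ : Fin k => V) where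
  carrier := {v | ∃ y ∈ N, ∀ i, v i = y}
  add_mem' := fun {a b} ha hb => by
    obtain ⟨ya, hya, ha⟩ := ha
    obtain ⟨yb, hyb, hb⟩ := hb
    exact ⟨ya + yb, N.add_mem hya hyb, fun i => by
      show a i + b i = ya + yb
      rw [ha i, hb i]⟩
  zero_mem' := ⟨0, N.zero_mem, fun _ => rfl⟩
  smul_mem' := fun c a ha => by
    obtain ⟨y, hy, h⟩ := ha
    exact ⟨c • y, N.smul_mem c hy, fun i => by
      show c • a i = c • y
      rw [h i]⟩

/-- The lattice `L(M,N,k) = L_M + L^N ⊆ V^k`. -/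
def LMN (M N : Submodule ℤ V) (k : ℕ) : Submodule ℤ (PiLp 2 fun _ : Fin k => V) :=
  LsubM M N k ⊔ LsupN N k

/-- The Leech polarization setup: `V` is 24-dimensional, `√2·Υ` is even unimodular with
minimum norm 4, and `M, N` is a polarization of `Υ` by two copies of the Leech lattice. -/
def LeechSetup (Υ M N : Submodule ℤ V) : Prop :=
  Module.finrank ℝ V = 24 ∧ IsLat Υ ∧ SqrtTwoEvenUnimod Υ ∧
  (∀ v ∈ Υ, v ≠ 0 → 4 ≤ 2 * ⟪v, v⟫) ∧
  IsPolarization Υ M N ∧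
  IsLat M ∧ IsEvenLat M ∧ IsUnimodularLat M ∧ minNorm M = 4 ∧
  IsLat N ∧ IsEvenLat N ∧ IsUnimodularLat N ∧ minNorm N = 4

/-- `(w,x,y,z) ∈ N × M × M × M` is admissible if `x + y + z ∈ M ∩ N`. -/
def Admissible (M N : Submodule ℤ V) (w x y z : V) : Prop :=
  w ∈ N ∧ x ∈ M ∧ y ∈ M ∧ z ∈ M ∧ x + y + z ∈ M ⊓ N

/-- An offender is an admissible quadruple all three of whose associated vectors
`w+x, w+y, w+z` have norm 2. -/
def Offender (M N : Submodule ℤ V) (w x y z : V) : Prop :=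
  Admissible M N w x y z ∧
  ⟪w + x, w + x⟫ = 2 ∧ ⟪w + y, w + y⟫ = 2 ∧ ⟪w + z, w + z⟫ = 2

/-- A super offender is an offender with `⟪w,w⟫ = 4` whose multiset of norms
`{⟪x,x⟫, ⟪y,y⟫, ⟪z,z⟫}` equals `{6,6,4}`. -/
def SuperOffender (M N : Submodule ℤ V) (w x y z : V) : Prop :=
  Offender M N w x y z ∧ ⟪w, w⟫ = 4 ∧
  ({⟪x, x⟫, ⟪y, y⟫, ⟪z, z⟫} : Multiset ℝ) = ({6, 6, 4} : Multiset ℝ)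

section Poisson

open MeasureTheory Set UnitAddTorus

variable {d : Type*} [Fintype d]

def pBox (m : d → ℤ) : Set (d → ℝ) := {x | ∀ i, x i ∈ Ioc (m i : ℝ) (m i + 1)}

def pExp (m : d → ℤ) (x : d → ℝ) : ℂ :=
  Complex.exp (-(2 * Real.pi * Complex.I * ∑ i, (m i : ℂ) * (x i : ℂ)))

lemma pBox_meas (m : d → ℤ) : MeasurableSet (pBox m) := by
  have : pBox m = Set.univ.pi fun i => Ioc (m i : ℝ) (m i + 1) := by ext; simp [pBox]
  rw [this]
  exact MeasurableSet.univ_pi fun i => measurableSet_Ioc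

lemma pBox_disj : Pairwise (Function.onFun Disjoint (pBox (d := d))) := by
  intro m k hmk
  rw [Function.onFun, Set.disjoint_left]
  intro x hx hy
  apply hmk
  funext i
  have h1 := hx i
  have h2 := hy i
  have a1 : (m i : ℝ) < k i + 1 := h1.1.trans_le h2.2
  have a2 : (k i : ℝ) < m i + 1 := h2.1.trans_le h1.2
  norm_cast at a1 a2
  omega

lemma pBox_union : (⋃ m : d → ℤ, pBox m) = Set.univ := by
  refine Set.eq_univ_of_forall fun x => Set.mem_iUnion.2 ⟨fun i => ⌈x i⌉ - 1, fun i => ?_⟩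
  constructor
  · push_cast; linarith [Int.ceil_lt_add_one (x i)]
  · push_cast; linarith [Int.le_ceil (x i)]

lemma pBox_integral {E : Type*} [NormedAddCommGroup E] [NormedSpace ℝ E] (h : (d → ℝ) → E)
    (m : d → ℤ) : ∫ x in pBox m, h x = ∫ x in pBox (0 : d → ℤ), h (x + fun i => (m i : ℝ)) := by
  have hmp : MeasurePreserving (fun x : d → ℝ => x + fun i => (m i : ℝ)) volume volume :=
    measurePreserving_add_right volume _
  have := hmp.setIntegral_preimage_emb (MeasurableEquiv.addRight _).measurableEmbedding h (pBox m)
  rw [← this]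
  congr 2
  ext x
  simp [pBox]
  refine forall_congr' fun i => ?_
  constructor
  · rintro ⟨a, b⟩; exact ⟨a, by linarith⟩
  · rintro ⟨a, b⟩; exact ⟨a, by linarith⟩

lemma pBox_hasSum {E : Type*} [NormedAddCommGroup E] [NormedSpace ℝ E] (h : (d → ℝ) → E)
    (hi : Integrable h) :
    HasSum (fun m : d → ℤ => ∫ x in pBox (0 : d → ℤ), h (x + fun i => (m i : ℝ))) (∫ x, h x) := by
  have := hasSum_integral_iUnion (f := h) (μ := volume) (s := pBox (d := d)) pBox_meas pBox_disj
    (by rw [pBox_union]; exact hi.integrableOn)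
  rw [pBox_union, Measure.restrict_univ] at this
  exact (funext (pBox_integral h)) ▸ this

lemma pExp_add (m k : d → ℤ) (x : d → ℝ) : pExp m (x + fun i => (k i : ℝ)) = pExp m x := by
  unfold pExp
  rw [Complex.exp_eq_exp_iff_exists_int]
  refine ⟨-∑ i, m i * k i, ?_⟩
  push_cast
  simp only [Pi.add_apply, Complex.ofReal_add, mul_add, Finset.sum_add_distrib]
  simp
  ring

lemma pExp_norm (m : d → ℤ) (x : d → ℝ) : ‖pExp m x‖ = 1 := by
  unfold pExp
  rw [Complex.norm_exp]
  have : (-(2 * Real.pi * Complex.I * ∑ i, (m i : ℂ) * (x i : ℂ))) =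
    ((-(2 * Real.pi * ∑ i, (m i : ℝ) * x i) : ℝ) : ℂ) * Complex.I := by
    push_cast; ring
  rw [this, Complex.re_ofReal_mul]
  simp

lemma pExp_cont (m : d → ℤ) : Continuous (pExp m) := by
  unfold pExp; fun_prop

local instance : MeasureSpace UnitAddCircle := ⟨AddCircle.haarAddCircle⟩

lemma mFourier_pExp (m : d → ℤ) (x : d → ℝ) :
    mFourier (-m) (fun i => (x i : UnitAddCircle)) = pExp m x := by
  unfold mFourier pExp
  simp only [ContinuousMap.coe_mk, fourier_coe_apply]
  rw [← Complex.exp_sum]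
  congr 1
  rw [Finset.mul_sum, ← Finset.sum_neg_distrib]
  refine Finset.sum_congr rfl fun i _ => ?_
  simp
  ring

theorem poisson_pi (g : (d → ℝ) → ℂ) (hc : Continuous g)
    (hb : ∀ R : ℝ, ∃ u : (d → ℤ) → ℝ, Summable u ∧ ∀ m (x : d → ℝ), (∀ i, |x i| ≤ R) →
      ‖g (x + fun i => (m i : ℝ))‖ ≤ u m)
    (hi : Integrable g)
    (hs : Summable fun m : d → ℤ => ∫ y, pExp m y * g y) :
    ∑' m : d → ℤ, g (fun i => (m i : ℝ)) = ∑' m : d → ℤ, ∫ y, pExp m y * g y := by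
  classical
  set F0 : (d → ℝ) → ℂ := fun x => ∑' m : d → ℤ, g (x + fun i => (m i : ℝ)) with hF0
  have hcont : Continuous F0 := by
    rw [continuous_iff_continuousAt]
    intro x
    obtain ⟨u, hu, hub⟩ := hb (‖x‖ + 1)
    have : ContinuousOn F0 (Metric.ball 0 (‖x‖ + 1)) := by
      refine continuousOn_tsum (u := u) (fun m => ?_) hu fun m y hy => hub m y fun i => ?_
      · exact (hc.comp (continuous_id.add continuous_const)).continuousOn
      · have := norm_le_pi_norm y i
        rw [Real.norm_eq_abs] at this
        have h2 : ‖y‖ < ‖x‖ + 1 := by simpa using hy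
        linarith
    exact this.continuousAt (Metric.isOpen_ball.mem_nhds (by simp))
  have hper : ∀ x (k : d → ℤ), F0 (x + fun i => (k i : ℝ)) = F0 x := by
    intro x k
    simp only [hF0]
    rw [← (Equiv.addLeft k).tsum_eq (fun m : d → ℤ => g (x + fun i => (m i : ℝ)))]
    refine tsum_congr fun m => ?_
    congr 1
    funext i
    simp [add_assoc]
  let q : (d → ℝ) → UnitAddTorus d := fun x i => (x i : UnitAddCircle)
  have hq : IsOpenQuotientMap q :=
    IsOpenQuotientMap.piMap (fun i => QuotientAddGroup.isOpenQuotientMap_mk)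
  let Ff : UnitAddTorus d → ℂ := fun t => F0 (Function.surjInv hq.surjective t)
  have hFq : ∀ x, Ff (q x) = F0 x := by
    intro x
    have h1 : q (Function.surjInv hq.surjective (q x)) = q x := Function.surjInv_eq _ _
    have h2 : ∀ i, ∃ n : ℤ, (Function.surjInv hq.surjective (q x)) i = x i + n := by
      intro i
      have h3 := congrFun h1 i
      have h4 := (QuotientAddGroup.eq (s := AddSubgroup.zmultiples (1:ℝ))).1 h3.symm
      obtain ⟨n, hn⟩ := AddSubgroup.mem_zmultiples_iff.1 h4
      refine ⟨n, ?_⟩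
      simp at hn
      linarith
    choose n hn using h2
    have : Function.surjInv hq.surjective (q x) = x + fun i => (n i : ℝ) := funext hn
    simp only [Ff]
    rw [this, hper]
  have hFc : Continuous Ff := by
    have : Ff ∘ q = F0 := funext hFq
    exact hq.isQuotientMap.continuous_iff.2 (this ▸ hcont)
  let F : C(UnitAddTorus d, ℂ) := ⟨Ff, hFc⟩
  have hcoef : ∀ m : d → ℤ, mFourierCoeff F m = ∫ y, pExp m y * g y := by
    intro m
    rw [mFourierCoeff_eq_integral _ _ (0 : d → ℝ)]
    have hset : {x : d → ℝ | ∀ i, x i ∈ Ioc ((0 : d → ℝ) i) ((0 : d → ℝ) i + 1)}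
      = pBox (0 : d → ℤ) := by ext; simp [pBox]
    rw [hset]
    have hinteg : Integrable (fun y => pExp m y * g y) := by
      refine hi.bdd_mul (c := 1) (pExp_cont m).aestronglyMeasurable ?_
      exact Filter.Eventually.of_forall fun x => (pExp_norm m x).le
    have h1 := pBox_hasSum _ hinteg
    have h2 := pBox_hasSum _ hinteg.norm
    rw [← h1.tsum_eq]
    have h3 := hasSum_integral_of_summable_integral_norm (μ := volume.restrict (pBox (0 : d → ℤ)))
      (F := fun (k : d → ℤ) x => pExp m (x + fun i => (k i : ℝ)) * g (x + fun i => (k i : ℝ)))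
      (fun k => (hinteg.comp_add_right _).integrableOn) h2.summable
    rw [h3.tsum_eq]
    congr 1
    funext x
    have e1 := mFourier_pExp m x
    have e2 := hFq x
    change mFourier (-m) (fun i => (x i : UnitAddCircle)) • Ff (q x) = _
    rw [e1, e2, smul_eq_mul]
    simp_rw [pExp_add]
    rw [tsum_mul_left]
  have hsum : Summable (mFourierCoeff F) := by
    refine hs.congr fun m => ?_
    rw [hcoef]
  have key := hasSum_mFourier_series_apply_of_summable hsum (q 0)
  have h5 : F (q 0) = F0 0 := hFq 0
  rw [h5] at key
  have h6 : F0 0 = ∑' m : d → ℤ, g (fun i => (m i : ℝ)) := by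
    simp [hF0]
  rw [← h6, ← key.tsum_eq]
  refine tsum_congr fun m => ?_
  rw [hcoef]
  have : mFourier m (q 0) = 1 := by
    simp [mFourier, q]
  rw [this]; simp

end Poisson

section Gauss
open MeasureTheory

lemma exp_bound (a : ℝ) (ha : 0 < a) (k : ℕ) (t : ℝ) (ht : 0 < t) :
    Real.exp (-(a * t ^ 2)) ≤ (k.factorial / a ^ k) * (t ^ (2 * k))⁻¹ := by
  have h := Real.pow_div_factorial_le_exp (x := a * t ^ 2) (by positivity) k
  rw [Real.exp_neg]
  have : ((k.factorial : ℝ) / a ^ k) * (t ^ (2 * k))⁻¹ = ((a * t ^ 2) ^ k / k.factorial)⁻¹ := by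
    rw [mul_pow, ← pow_mul]; field_simp
  rw [this]
  gcongr

lemma summable_exp_int (n : ℕ) (a : ℝ) (ha : 0 < a) :
    Summable fun m : Fin n → ℤ => Real.exp (-(a * ‖(fun i => (m i : ℝ))‖ ^ 2)) := by
  let L := Submodule.span ℤ (Set.range (Pi.basisFun ℝ (Fin n)))
  have hmem : ∀ m : Fin n → ℤ, (fun i => (m i : ℝ)) ∈ L := by
    intro m
    have : (fun i => (m i : ℝ)) = ∑ i, m i • (Pi.basisFun ℝ (Fin n) i) := by
      funext j
      simp [Finset.sum_apply, Pi.single_apply]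
    rw [this]
    exact Submodule.sum_mem _ fun i _ => Submodule.smul_mem _ _ (Submodule.subset_span ⟨i, rfl⟩)
  obtain ⟨k, hk⟩ : ∃ k : ℕ, Module.finrank ℤ L < 2 * k := ⟨Module.finrank ℤ L + 1, by omega⟩
  have h1 := ZLattice.summable_norm_pow_inv L (2 * k) hk
  have hinj : Function.Injective (fun m : Fin n → ℤ => (⟨_, hmem m⟩ : L)) := by
    intro m m' h
    have := congrArg Subtype.val h
    funext i
    have h3 : (m i : ℝ) = m' i := congrFun this i
    exact_mod_cast h3
  have h2 := h1.comp_injective hinj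
  refine Summable.of_norm_bounded_eventually (h2.mul_left (k.factorial / a ^ k)) ?_
  refine Filter.Eventually.mono (Set.Finite.compl_mem_cofinite (Set.finite_singleton (0 : Fin n → ℤ))) ?_
  intro m hm
  have hm0 : (fun i => (m i : ℝ)) ≠ 0 := by
    intro h0
    apply hm
    funext i
    have h3 : (m i : ℝ) = 0 := congrFun h0 i
    exact_mod_cast h3
  have := exp_bound a ha k ‖(fun i => (m i : ℝ))‖ (norm_pos_iff.2 hm0)
  rw [Real.norm_eq_abs, Real.abs_exp]
  simpa using this

variable {n : ℕ}

lemma phi_bound (b : Basis (Fin n) ℝ V) : ∃ κ : ℝ, 0 < κ ∧ ∀ y, κ * ‖y‖ ≤ ‖b.equivFun.symm y‖ := by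
  have : FiniteDimensional ℝ V := b.finiteDimensional_of_finite
  let e := (b.equivFun : V ≃ₗ[ℝ] (Fin n → ℝ)).toLinearMap.toContinuousLinearMap
  refine ⟨(‖e‖ + 1)⁻¹, by positivity, fun y => ?_⟩
  have h1 : ‖y‖ ≤ ‖e‖ * ‖b.equivFun.symm y‖ := by
    have := e.le_opNorm (b.equivFun.symm y)
    have h2 : e (b.equivFun.symm y) = y := b.equivFun.apply_symm_apply y
    rwa [h2] at this
  rw [inv_mul_le_iff₀ (by positivity)]
  nlinarith [norm_nonneg (b.equivFun.symm y)]

lemma phi_summable (b : Basis (Fin n) ℝ V) (a : ℝ) (ha : 0 < a) (R : ℝ) :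
    ∃ u : (Fin n → ℤ) → ℝ, Summable u ∧ ∀ m (x : Fin n → ℝ), (∀ i, |x i| ≤ R) →
      Real.exp (-(a * ‖b.equivFun.symm (x + fun i => (m i : ℝ))‖ ^ 2)) ≤ u m := by
  obtain ⟨κ, hκ, hb⟩ := phi_bound b
  refine ⟨fun m => Real.exp (a * κ ^ 2 * R ^ 2) *
    Real.exp (-((a * κ ^ 2 / 2) * ‖(fun i => (m i : ℝ))‖ ^ 2)),
    (summable_exp_int n _ (by positivity)).mul_left _, ?_⟩
  intro m x hx
  beta_reduce
  rw [← Real.exp_add, Real.exp_le_exp]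
  set y : Fin n → ℝ := fun i => (m i : ℝ)
  have h1 := hb (x + y)
  rcases Nat.eq_zero_or_pos n with h0 | h0
  · subst h0
    have hy0 : y = 0 := Subsingleton.elim _ _
    have hx0 : x = 0 := Subsingleton.elim _ _
    rw [hy0, hx0, add_zero, map_zero, norm_zero, norm_zero]
    have : 0 ≤ a * κ ^ 2 * R ^ 2 := by positivity
    simpa using this
  have hR : 0 ≤ R := (abs_nonneg _).trans (hx ⟨0, h0⟩)
  have h2 : ‖x‖ ≤ R := (pi_norm_le_iff_of_nonneg hR).2 hx
  have h3 : ‖y‖ ≤ ‖x + y‖ + ‖x‖ := by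
    have := norm_sub_le (x + y) x
    simpa using this
  have h4 : (κ * ‖x + y‖) ^ 2 ≤ ‖b.equivFun.symm (x + y)‖ ^ 2 := by gcongr
  have h5 : ‖y‖ ^ 2 ≤ 2 * ‖x + y‖ ^ 2 + 2 * R ^ 2 := by
    have : ‖y‖ ^ 2 ≤ (‖x + y‖ + R) ^ 2 := by gcongr; linarith
    nlinarith [sq_nonneg (‖x + y‖ - R)]
  have h6 := mul_le_mul_of_nonneg_left h4 ha.le
  have h7 := mul_le_mul_of_nonneg_left h5 (by positivity : 0 ≤ a * κ ^ 2)
  nlinarith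

lemma phi_measurePreserving [FiniteDimensional ℝ V] [MeasurableSpace V] [BorelSpace V]
    (b : Basis (Fin n) ℝ V) (hG : (Matrix.of fun i j : Fin n => ⟪b i, b j⟫).det = 1) :
    MeasurePreserving (b.equivFun.symm : (Fin n → ℝ) → V) volume volume := by
  have hn : finrank ℝ V = n := by simpa using finrank_eq_card_basis b
  let o : OrthonormalBasis (Fin n) ℝ V := (stdOrthonormalBasis ℝ V).reindex (finCongr hn)
  let A : Matrix (Fin n) (Fin n) ℝ := Matrix.of fun i j => ⟪o i, b j⟫
  have hA : A.transpose * A = Matrix.of fun i j : Fin n => ⟪b i, b j⟫ := by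
    ext i j
    simp only [Matrix.mul_apply, Matrix.transpose_apply, A, Matrix.of_apply]
    rw [← o.sum_inner_mul_inner (b i) (b j)]
    refine Finset.sum_congr rfl fun k _ => ?_
    rw [real_inner_comm]
  have hdet : A.det * A.det = 1 := by
    have := congrArg Matrix.det hA
    rwa [Matrix.det_mul, Matrix.det_transpose, hG] at this
  have habs : |A.det| = 1 := by
    rcases mul_self_eq_one_iff.1 hdet with h | h <;> simp [h]
  have h1 : MeasurePreserving (Matrix.toLin' A) volume volume := by
    refine ⟨(LinearMap.continuous_of_finiteDimensional _).measurable, ?_⟩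
    rw [Real.map_matrix_volume_pi_eq_smul_volume_pi (by intro h; simp [h] at habs)]
    rw [abs_inv, habs]; simp
  have h2 := PiLp.volume_preserving_toLp (Fin n)
  have h3 := o.repr.symm.measurePreserving
  have h4 := h3.comp (h2.comp h1)
  have hfun : (b.equivFun.symm : (Fin n → ℝ) → V) =
      (o.repr.symm ∘ WithLp.toLp 2 ∘ (Matrix.toLin' A)) := by
    funext y
    simp only [Function.comp]
    rw [LinearIsometryEquiv.eq_symm_apply]
    ext i
    rw [o.repr_apply_apply, Basis.equivFun_symm_apply, inner_sum]
    simp [Matrix.toLin'_apply, Matrix.mulVec, dotProduct, A, inner_smul_right, mul_comm]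
  rw [hfun]
  exact h4

def th (b : Basis (Fin n) ℝ V) (τ : ℂ) : ℂ :=
  ∑' c : Fin n → ℤ, Complex.exp (Real.pi * Complex.I * τ * (‖b.equivFun.symm (fun i => (c i : ℝ))‖ : ℂ) ^ 2)

lemma norm_gauss (τ : ℂ) (r : ℝ) :
    ‖Complex.exp (Real.pi * Complex.I * τ * (r : ℂ) ^ 2)‖ = Real.exp (-(Real.pi * τ.im * r ^ 2)) := by
  rw [Complex.norm_exp]
  congr 1
  have : (Real.pi * Complex.I * τ * (r : ℂ) ^ 2) = ((Real.pi * r ^ 2 : ℝ) : ℂ) * (Complex.I * τ) := by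
    push_cast; ring
  rw [this, Complex.re_ofReal_mul]
  simp
  ring

lemma gaussInt [FiniteDimensional ℝ V] [MeasurableSpace V] [BorelSpace V]
    (hV : finrank ℝ V = 24) (τ : ℂ) (hτ : 0 < τ.im) (w : V) :
    ∫ v : V, Complex.exp (-(2 * Real.pi * Complex.I) * (⟪w, v⟫ : ℂ)) *
      Complex.exp (Real.pi * Complex.I * τ * (‖v‖ : ℂ) ^ 2) =
      (τ ^ 12)⁻¹ * Complex.exp (Real.pi * Complex.I * (-1 / τ) * (‖w‖ : ℂ) ^ 2) := by
  have hτ0 : τ ≠ 0 := by rintro rfl; simp at hτ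
  have hpi : (Real.pi : ℂ) ≠ 0 := by exact_mod_cast Real.pi_ne_zero
  have hre : 0 < (-(Real.pi * Complex.I * τ)).re := by
    have : (-(Real.pi * Complex.I * τ)).re = Real.pi * τ.im := by simp
    rw [this]; positivity
  have := GaussianFourier.integral_cexp_neg_mul_sq_norm_add (V := V) hre (-(2 * Real.pi * Complex.I)) w
  rw [hV] at this
  have e : ((24 : ℕ) : ℂ) / 2 = ((12 : ℕ) : ℂ) := by norm_num
  rw [e, Complex.cpow_natCast] at this
  have e2 : ((Real.pi : ℂ) / -(Real.pi * Complex.I * τ)) = Complex.I / τ := by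
    have h : (Complex.I / τ) = - (1 / (Complex.I * τ)) := by
      field_simp; simp
    rw [h]; field_simp
  rw [e2, div_pow] at this
  have e3 : (Complex.I : ℂ) ^ 12 = 1 := by
    rw [show 12 = 4 * 3 from rfl, pow_mul, Complex.I_pow_four, one_pow]
  rw [e3, one_div] at this
  convert this using 2
  · funext v
    rw [← Complex.exp_add]
    congr 1
    ring
  · congr 1
    have : (-(2 * Real.pi * Complex.I)) ^ 2 = -(4 * (Real.pi : ℂ) ^ 2) := by
      ring_nf; simp
    rw [this]
    have hI := Complex.I_ne_zero
    field_simp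
    simp

theorem th_S (b : Basis (Fin n) ℝ V) (hV : finrank ℝ V = 24)
    (G : Matrix (Fin n) (Fin n) ℤ) (hGb : ∀ i j, ⟪b i, b j⟫ = (G i j : ℝ)) (hG : G.det = 1)
    (τ : ℂ) (hτ : 0 < τ.im) :
    th b τ = (τ ^ 12)⁻¹ * th b (-1 / τ) := by
  have : FiniteDimensional ℝ V := b.finiteDimensional_of_finite
  let _ : MeasurableSpace V := borel V
  have : BorelSpace V := ⟨rfl⟩
  have hτ0 : τ ≠ 0 := by rintro rfl; simp at hτ
  have hGR : (Matrix.of fun i j : Fin n => ⟪b i, b j⟫).det = 1 := by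
    have : (Matrix.of fun i j : Fin n => ⟪b i, b j⟫) = G.map (Int.castRingHom ℝ) := by
      ext i j; simp [hGb]
    rw [this]
    have h := (Int.castRingHom ℝ).map_det G
    rw [hG] at h
    simpa using h.symm
  have hmp := phi_measurePreserving b hGR
  have hemb : MeasurableEmbedding (b.equivFun.symm : (Fin n → ℝ) → V) :=
    (b.equivFun.symm.toContinuousLinearEquiv.toHomeomorph).measurableEmbedding
  have hcont : Continuous (b.equivFun.symm : (Fin n → ℝ) → V) :=
    b.equivFun.symm.toContinuousLinearEquiv.continuous
  set g : (Fin n → ℝ) → ℂ := fun y =>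
    Complex.exp (Real.pi * Complex.I * τ * (‖b.equivFun.symm y‖ : ℂ) ^ 2) with hg
  have hgi : Integrable g := by
    have hre : 0 < (-(Real.pi * Complex.I * τ)).re := by
      have : (-(Real.pi * Complex.I * τ)).re = Real.pi * τ.im := by simp
      rw [this]; positivity
    have := GaussianFourier.integrable_cexp_neg_mul_sq_norm_add (V := V) hre 0 0
    have h2 := (hmp.integrable_comp_emb hemb).2 this
    convert h2 using 1
    funext y
    simp [hg]
  have hw : ∀ (c : Fin n → ℤ) (y : Fin n → ℝ), ∑ i, ((G.mulVec c i : ℤ) : ℝ) * y i =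
      ⟪b.equivFun.symm (fun i => (c i : ℝ)), b.equivFun.symm y⟫ := by
    intro c y
    rw [Basis.equivFun_symm_apply, Basis.equivFun_symm_apply, inner_sum]
    refine Finset.sum_congr rfl fun i _ => ?_
    rw [inner_smul_right, sum_inner, mul_comm]
    congr 1
    simp only [Matrix.mulVec, dotProduct]
    push_cast
    refine Finset.sum_congr rfl fun j _ => ?_
    rw [real_inner_smul_left, hGb, mul_comm, ← hGb, real_inner_comm, hGb]
  have hinteg : ∀ c : Fin n → ℤ, ∫ y, pExp (G.mulVec c) y * g y = (τ ^ 12)⁻¹ *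
      Complex.exp (Real.pi * Complex.I * (-1 / τ) * (‖b.equivFun.symm (fun i => (c i : ℝ))‖ : ℂ) ^ 2) := by
    intro c
    rw [← gaussInt hV τ hτ, ← hmp.integral_comp hemb]
    congr 1
    funext y
    simp only [pExp, hg]
    congr 2
    rw [← hw]
    push_cast
    ring
  have hadj : G * G.adjugate = 1 := by rw [Matrix.mul_adjugate, hG, one_smul]
  have hadj' : G.adjugate * G = 1 := by rw [Matrix.adjugate_mul, hG, one_smul]
  let E : (Fin n → ℤ) ≃ (Fin n → ℤ) :=
    { toFun := G.mulVec
      invFun := G.adjugate.mulVec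
      left_inv := fun c => by simp [Matrix.mulVec_mulVec, hadj']
      right_inv := fun c => by simp [Matrix.mulVec_mulVec, hadj] }
  have him : 0 < (-1 / τ).im := by
    have := UpperHalfPlane.im_inv_neg_coe_pos ⟨τ, hτ⟩
    simpa [neg_div, inv_neg] using this
  have hsum : Summable fun c : Fin n → ℤ => Complex.exp (Real.pi * Complex.I * (-1 / τ) *
      (‖b.equivFun.symm (fun i => (c i : ℝ))‖ : ℂ) ^ 2) := by
    obtain ⟨u, hu, hub⟩ := phi_summable b (Real.pi * (-1 / τ).im) (by positivity) 0
    refine Summable.of_norm_bounded hu fun c => ?_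
    rw [norm_gauss]
    have := hub c 0 (by simp)
    rwa [zero_add] at this
  have key := poisson_pi g (by fun_prop) ?_ hgi ?_
  · unfold th
    rw [← tsum_mul_left]
    change ∑' c : Fin n → ℤ, g (fun i => (c i : ℝ)) = _
    rw [key, ← E.tsum_eq]
    exact tsum_congr hinteg
  · intro R
    obtain ⟨u, hu, hub⟩ := phi_summable b (Real.pi * τ.im) (by positivity) R
    refine ⟨u, hu, fun m x hx => ?_⟩
    simp only [hg]
    rw [norm_gauss]
    exact hub m x hx
  · rw [← E.summable_iff]
    refine (hsum.mul_left _).congr fun c => (hinteg c).symm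

end Gauss

section Theta

open scoped MatrixGroups CongruenceSubgroup ModularForm Manifold

def wt12A : ModularForm 𝒮ℒ 12 := ModularForm.mcast (by decide) (ModularForm.E₄.pow 3)

def wt12B : ModularForm 𝒮ℒ 12 := ModularForm.mcast (by decide) (ModularForm.E₆.pow 2)

def wt12 : ModularForm 𝒮ℒ 12 := (7 / 12 : ℂ) • wt12A + (5 / 12 : ℂ) • wt12B

open UpperHalfPlane in
lemma qExp_comb (A B : ModularForm 𝒮ℒ 12) (s t : ℂ) :
    qExpansion 1 (s • A + t • B : ModularForm 𝒮ℒ 12) = s • qExpansion 1 A + t • qExpansion 1 B := by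
  rw [← ModularForm.qExpansion_smul one_pos one_mem_strictPeriods_SL s A,
    ← ModularForm.qExpansion_smul one_pos one_mem_strictPeriods_SL t B]
  exact ModularForm.qExpansion_add one_pos one_mem_strictPeriods_SL (s • A) (t • B)

open UpperHalfPlane EisensteinSeries ModularForm in
lemma wt12_qExp : qExpansion 1 wt12 =
    (7 / 12 : ℂ) • (qExpansion 1 E₄ * qExpansion 1 E₄ * qExpansion 1 E₄) +
    (5 / 12 : ℂ) • (qExpansion 1 E₆ * qExpansion 1 E₆) := by
  have h1 : (qExpansion 1 wt12A) =
      qExpansion 1 E₄ * qExpansion 1 E₄ * qExpansion 1 E₄ := by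
    simp only [wt12A, coe_mcast, ModularForm.qExpansion_pow one_pos one_mem_strictPeriods_SL]; ring
  have h2 : (qExpansion 1 wt12B) =
      qExpansion 1 E₆ * qExpansion 1 E₆ := by
    simp only [wt12B, coe_mcast, ModularForm.qExpansion_pow one_pos one_mem_strictPeriods_SL]; ring
  rw [wt12, qExp_comb, h1, h2]

open UpperHalfPlane EisensteinSeries ModularForm in
lemma E4c2 : (qExpansion 1 E₄).coeff 2 = 2160 := by
  norm_num [E_qExpansion_coeff _ ⟨2, rfl⟩, show bernoulli 4 = -1 / 30 by decide +kernel,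
    show ArithmeticFunction.sigma 3 2 = 9 by decide +kernel]

open UpperHalfPlane EisensteinSeries ModularForm in
lemma E6c2 : (qExpansion 1 E₆).coeff 2 = -16632 := by
  norm_num [E_qExpansion_coeff _ ⟨3, rfl⟩, show bernoulli 6 = 1 / 42 by decide +kernel,
    show ArithmeticFunction.sigma 5 2 = 33 by decide +kernel]

open UpperHalfPlane EisensteinSeries ModularForm in
lemma wt12_c : (qExpansion 1 wt12).coeff 0 = 1 ∧ (qExpansion 1 wt12).coeff 1 = 0 ∧
    (qExpansion 1 wt12).coeff 2 = 196560 := by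
  rw [wt12_qExp]
  refine ⟨?_, ?_, ?_⟩ <;>
  norm_num [PowerSeries.coeff_mul, -PowerSeries.coeff_zero_eq_constantCoeff, Finset.Nat.antidiagonal_succ, E₄_qExpansion_coeff_one,
    E₆_qExpansion_coeff_one, E_qExpansion_coeff_zero _ ⟨2, rfl⟩,
    E_qExpansion_coeff_zero _ ⟨3, rfl⟩, E4c2, E6c2]

open UpperHalfPlane in
lemma coeff_two_eq (f : ModularForm 𝒮ℒ 12) (h0 : (qExpansion 1 f).coeff 0 = 1)
    (h1 : (qExpansion 1 f).coeff 1 = 0) : (qExpansion 1 f).coeff 2 = 196560 := by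
  have hs : qExpansion 1 (f - wt12 : ModularForm 𝒮ℒ 12) = qExpansion 1 f - qExpansion 1 wt12 :=
    ModularForm.qExpansion_sub one_pos one_mem_strictPeriods_SL f wt12
  obtain ⟨w0, w1, w2⟩ := wt12_c
  have hz : f - wt12 = 0 := by
    apply ModularForm.sturm_bound_levelOne
    rw [hs]
    refine lt_of_lt_of_le (b := ((2 : ℕ) : ℕ∞)) (by norm_num; decide) ?_
    refine PowerSeries.nat_le_order _ _ fun i hi => ?_
    interval_cases i
    · rw [map_sub, h0, w0, sub_self]
    · rw [map_sub, h1, w1, sub_self]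
  rw [sub_eq_zero.1 hz, w2]

variable {n : ℕ}

lemma th_bound (b : Basis (Fin n) ℝ V) (δ : ℝ) (hδ : 0 < δ) :
    ∃ u : (Fin n → ℤ) → ℝ, Summable u ∧ ∀ c (τ : ℂ), δ ≤ τ.im →
      ‖Complex.exp (Real.pi * Complex.I * τ * (‖b.equivFun.symm (fun i => (c i : ℝ))‖ : ℂ) ^ 2)‖ ≤ u c := by
  obtain ⟨u, hu, hub⟩ := phi_summable b (Real.pi * δ) (by positivity) 0
  refine ⟨u, hu, fun c τ hτ => ?_⟩
  rw [norm_gauss]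
  have := hub c 0 (by simp)
  rw [zero_add] at this
  refine le_trans ?_ this
  gcongr

lemma th_diff (b : Basis (Fin n) ℝ V) : DifferentiableOn ℂ (th b) {z | 0 < z.im} := by
  intro z hz
  have hz' : 0 < z.im := hz
  obtain ⟨u, hu, hub⟩ := th_bound b (z.im / 2) (by positivity)
  have hopen : IsOpen {w : ℂ | z.im / 2 < w.im} := isOpen_lt continuous_const Complex.continuous_im
  have : DifferentiableOn ℂ (th b) {w : ℂ | z.im / 2 < w.im} := by
    refine Complex.differentiableOn_tsum_of_summable_norm hu (fun c => ?_) hopen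
      fun c w hw => hub c w (le_of_lt hw)
    fun_prop
  exact (this.differentiableAt (hopen.mem_nhds (by simp; linarith))).differentiableWithinAt

variable (b : Basis (Fin n) ℝ V) (hV : finrank ℝ V = 24)
    (G : Matrix (Fin n) (Fin n) ℤ) (hGb : ∀ i j, ⟪b i, b j⟫ = (G i j : ℝ)) (hG : G.det = 1)
    (Q : (Fin n → ℤ) → ℕ) (hQ : ∀ c, ‖b.equivFun.symm (fun i => (c i : ℝ))‖ ^ 2 = 2 * Q c)

lemma th_q (hQ : ∀ c, ‖b.equivFun.symm (fun i => (c i : ℝ))‖ ^ 2 = 2 * Q c)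
    (τ : ℂ) : th b τ = ∑' c, (Complex.exp (2 * Real.pi * Complex.I * τ)) ^ (Q c) := by
  unfold th
  refine tsum_congr fun c => ?_
  rw [← Complex.exp_nat_mul]
  congr 1
  have : ((‖b.equivFun.symm (fun i => (c i : ℝ))‖ : ℂ)) ^ 2 = 2 * (Q c : ℂ) := by
    exact_mod_cast congrArg (fun x : ℝ => (x : ℂ)) (hQ c)
  rw [this]; ring

lemma th_T (hQ : ∀ c, ‖b.equivFun.symm (fun i => (c i : ℝ))‖ ^ 2 = 2 * Q c)
    (τ : ℂ) : th b (τ + 1) = th b τ := by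
  rw [th_q b Q hQ, th_q b Q hQ]
  have : Complex.exp (2 * Real.pi * Complex.I * (τ + 1)) = Complex.exp (2 * Real.pi * Complex.I * τ) := by
    rw [mul_add, mul_one, Complex.exp_add, Complex.exp_two_pi_mul_I, mul_one]
  rw [this]

def thF : UpperHalfPlane → ℂ := fun τ => th b (τ : ℂ)

lemma thF_T (hQ : ∀ c, ‖b.equivFun.symm (fun i => (c i : ℝ))‖ ^ 2 = 2 * Q c)
    : (thF b ∣[(12 : ℤ)] ModularGroup.T) = thF b := by
  ext z
  have hd : UpperHalfPlane.denom ModularGroup.T z = 1 := by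
    rw [ModularGroup.denom_apply]; simp [ModularGroup.T]
  rw [ModularForm.SL_slash_apply, hd, UpperHalfPlane.modular_T_smul]
  simp only [thF]
  have := th_T b Q hQ z
  simp [add_comm (1:ℂ), this]

lemma thF_S (hV : finrank ℝ V = 24)
    (G : Matrix (Fin n) (Fin n) ℤ) (hGb : ∀ i j, ⟪b i, b j⟫ = (G i j : ℝ)) (hG : G.det = 1)
    : (thF b ∣[(12 : ℤ)] ModularGroup.S) = thF b := by
  ext z
  suffices th b (-(z : ℂ)⁻¹) * ((z : ℂ) ^ 12)⁻¹ = th b z by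
    rw [ModularForm.SL_slash_apply, ModularGroup.denom_S, UpperHalfPlane.modular_S_smul]
    simpa [thF, zpow_neg] using this
  rw [th_S b hV G hGb hG z z.2, mul_comm, neg_div, one_div]

lemma thF_bdd : UpperHalfPlane.IsBoundedAtImInfty (thF b) := by
  rw [UpperHalfPlane.isBoundedAtImInfty_iff]
  obtain ⟨u, hu, hub⟩ := th_bound b 1 one_pos
  refine ⟨∑' c, u c, 1, fun z hz => ?_⟩
  exact tsum_of_norm_bounded hu.hasSum fun c => hub c z hz

def thM : ModularForm 𝒮ℒ 12 where
  toFun := thF b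
  slash_action_eq' A hA := by
    obtain ⟨A, rfl⟩ := hA
    exact SlashInvariantForm.slash_action_generators_SL2Z (thF_S b hV G hGb hG) (thF_T b Q hQ) A
  holo' := by
    rw [UpperHalfPlane.mdifferentiable_iff]
    refine (th_diff b).congr fun z hz => ?_
    simp [thF, UpperHalfPlane.ofComplex_apply_of_im_pos hz]
  bdd_at_cusps' hc := by
    rw [Subgroup.IsArithmetic.isCusp_iff_isCusp_SL2Z] at hc
    rw [OnePoint.isBoundedAt_iff_forall_SL2Z hc]
    intro γ _
    rw [SlashInvariantForm.slash_action_generators_SL2Z (thF_S b hV G hGb hG) (thF_T b Q hQ)]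
    exact thF_bdd b

lemma Q_fin (hQ : ∀ c, ‖b.equivFun.symm (fun i => (c i : ℝ))‖ ^ 2 = 2 * Q c)
    (k : ℕ) : Finite {c // Q c = k} := by
  by_contra hinf
  rw [not_finite_iff_infinite] at hinf
  obtain ⟨u, hu, hub⟩ := phi_summable b 1 one_pos 0
  have h1 : Summable fun c : Fin n → ℤ => Real.exp (-(1 * ‖b.equivFun.symm (fun i => (c i : ℝ))‖ ^ 2)) := by
    refine Summable.of_nonneg_of_le (fun c => (Real.exp_pos _).le) (fun c => ?_) hu
    have := hub c 0 (by simp)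
    rwa [zero_add] at this
  have h2 := h1.subtype {c | Q c = k}
  have h3 : Summable fun c : {c // Q c = k} => Real.exp (-(1 * (2 * k))) := by
    refine h2.congr fun c => ?_
    have := hQ c.1
    rw [c.2] at this
    simp only [Function.comp]
    rw [← this]
  rw [summable_const_iff] at h3
  exact (Real.exp_pos _).ne' h3

lemma th_hasSum (hQ : ∀ c, ‖b.equivFun.symm (fun i => (c i : ℝ))‖ ^ 2 = 2 * Q c)
    (τ : UpperHalfPlane) :
    HasSum (fun m : ℕ => (Nat.card {c // Q c = m} : ℂ) • Function.Periodic.qParam 1 τ ^ m) (thF b τ) := by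
  have hq : Function.Periodic.qParam 1 (τ : ℂ) = Complex.exp (2 * Real.pi * Complex.I * τ) := by
    simp [Function.Periodic.qParam]
  rw [hq]
  have hs : Summable fun c => (Complex.exp (2 * Real.pi * Complex.I * τ)) ^ (Q c) := by
    obtain ⟨u, hu, hub⟩ := th_bound b τ.im τ.2
    refine Summable.of_norm_bounded hu fun c => ?_
    refine le_trans (le_of_eq ?_) (hub c τ le_rfl)
    congr 1
    rw [← Complex.exp_nat_mul]
    congr 1
    have : ((‖b.equivFun.symm (fun i => (c i : ℝ))‖ : ℂ)) ^ 2 = 2 * (Q c : ℂ) := by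
      exact_mod_cast congrArg (fun x : ℝ => (x : ℂ)) (hQ c)
    rw [this]; ring
  have h1 := hs.hasSum
  rw [← th_q b Q hQ] at h1
  have h2 := (Equiv.sigmaFiberEquiv Q).hasSum_iff.2 h1
  refine h2.sigma fun m => ?_
  have := Q_fin b Q hQ m
  have := Fintype.ofFinite {c // Q c = m}
  have h3 := hasSum_fintype (fun c : {c // Q c = m} => (Complex.exp (2 * Real.pi * Complex.I * τ)) ^ m)
  simp only [Finset.sum_const, Finset.card_univ, nsmul_eq_mul] at h3
  rw [Nat.card_eq_fintype_card, smul_eq_mul]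
  convert h3 using 1
  funext c
  simp [Equiv.sigmaFiberEquiv, c.2]

theorem card_min (hV : finrank ℝ V = 24)
    (G : Matrix (Fin n) (Fin n) ℤ) (hGb : ∀ i j, ⟪b i, b j⟫ = (G i j : ℝ)) (hG : G.det = 1)
    (Q : (Fin n → ℤ) → ℕ) (hQ : ∀ c, ‖b.equivFun.symm (fun i => (c i : ℝ))‖ ^ 2 = 2 * Q c)
    (h0 : ∀ c, Q c = 0 → c = 0) (h1 : ∀ c, Q c ≠ 1) :
    Nat.card {c // Q c = 2} = 196560 := by
  have hc : ∀ m, (Nat.card {c // Q c = m} : ℂ) =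
      (UpperHalfPlane.qExpansion 1 (thM b hV G hGb hG Q hQ)).coeff m := fun m =>
    ModularFormClass.qExpansion_coeff_unique (f := thM b hV G hGb hG Q hQ) (c := fun m => (Nat.card {c // Q c = m} : ℂ)) one_pos one_mem_strictPeriods_SL (th_hasSum b Q hQ) m
  have hQ0 : Q 0 = 0 := by
    have := hQ 0
    have h : (fun i => (((0 : Fin n → ℤ) i : ℤ) : ℝ)) = 0 := by funext; simp
    rw [h] at this
    simp at this
    exact this
  have e0 : Nat.card {c // Q c = 0} = 1 := by
    have : Unique {c // Q c = 0} :=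
      { default := ⟨0, hQ0⟩, uniq := fun c => Subtype.ext (h0 c.1 c.2) }
    exact Nat.card_unique
  have e1 : Nat.card {c // Q c = 1} = 0 := by
    have : IsEmpty {c // Q c = 1} := ⟨fun c => h1 c.1 c.2⟩
    exact Nat.card_of_isEmpty
  have := coeff_two_eq (thM b hV G hGb hG Q hQ) (by rw [← hc, e0]; simp) (by rw [← hc, e1]; simp)
  rw [← hc] at this
  exact_mod_cast this

end Theta

section Counting

/-- The real basis coming from a `ℤ`-basis of a lattice with non-degenerate Gram matrix. -/
lemma exists_realBasis {n : ℕ} (L : Submodule ℤ V) (hL : Submodule.span ℝ (L : Set V) = ⊤)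
    (b : Basis (Fin n) ℤ L)
    (hb : (Matrix.of fun i j : Fin n => ⟪(b i : V), (b j : V)⟫).det ≠ 0) :
    ∃ bR : Basis (Fin n) ℝ V, ∀ i, bR i = (b i : V) := by
  have hli : LinearIndependent ℝ (fun i => (b i : V)) := by
    rw [Fintype.linearIndependent_iff]
    intro g hg
    have h0 : g = 0 := by
      apply Matrix.eq_zero_of_mulVec_eq_zero hb
      funext j
      have := congrArg (fun v => ⟪(b j : V), v⟫) hg
      simp only [inner_sum, inner_smul_right, inner_zero_right] at this
      simp only [Matrix.mulVec, dotProduct, Matrix.of_apply, Pi.zero_apply]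
      rw [← this]
      exact Finset.sum_congr rfl fun i _ => mul_comm _ _
    intro i
    rw [h0]; rfl
  have hsp : ⊤ ≤ Submodule.span ℝ (Set.range fun i => (b i : V)) := by
    rw [← hL, Submodule.span_le]
    intro v hv
    have h := b.sum_repr ⟨v, hv⟩
    have h2 : ((∑ i, b.repr ⟨v, hv⟩ i • b i : L) : V) = v := congrArg Subtype.val h
    rw [← h2]
    simp only [AddSubmonoidClass.coe_finsetSum, SetLike.val_smul]
    refine Submodule.sum_mem _ fun i _ => ?_
    rw [← Int.cast_smul_eq_zsmul ℝ]
    exact Submodule.smul_mem _ _ (Submodule.subset_span ⟨i, rfl⟩)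
  exact ⟨Basis.mk hli hsp, fun i => by simp⟩

lemma card_norm_four (L : Submodule ℤ V) (hV : finrank ℝ V = 24)
    (hL : Submodule.span ℝ (L : Set V) = ⊤) (he : IsEvenLat L) (hu : IsUnimodularLat L)
    (hmin : ∀ v ∈ L, v ≠ 0 → 4 ≤ ⟪v, v⟫) :
    Nat.card {v : L // ⟪(v : V), (v : V)⟫ = 4} = 196560 := by
  obtain ⟨n, b, hb⟩ := hu
  obtain ⟨bR, hbR⟩ := exists_realBasis L hL b (by rw [hb]; norm_num)
  choose G hG using fun i j => he.1 (b i) (b i).2 (b j) (b j).2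
  have hdet : (Matrix.of G).det = 1 := by
    have h : (Matrix.of fun i j : Fin n => ⟪(b i : V), (b j : V)⟫) =
        (Matrix.of G).map (Int.castRingHom ℝ) := by
      ext i j; simp [hG]
    rw [h, ← RingHom.mapMatrix_apply, ← RingHom.map_det] at hb
    simpa using hb
  let v : (Fin n → ℤ) → L := fun c => b.equivFun.symm c
  have hv : ∀ c, bR.equivFun.symm (fun i => (c i : ℝ)) = (v c : V) := by
    intro c
    simp only [v, Basis.equivFun_symm_apply, AddSubmonoidClass.coe_finsetSum, SetLike.val_smul]
    refine Finset.sum_congr rfl fun i _ => ?_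
    rw [hbR, Int.cast_smul_eq_zsmul]
  have hex : ∀ c, ∃ k : ℕ, ⟪(v c : V), (v c : V)⟫ = 2 * (k : ℝ) := by
    intro c
    obtain ⟨m, hm⟩ := he.2 (v c) (v c).2
    have h0 : (0 : ℝ) ≤ m := by
      have := real_inner_self_nonneg (x := (v c : V))
      linarith
    have h0' : 0 ≤ m := by exact_mod_cast h0
    lift m to ℕ using h0'
    exact ⟨m, by simpa using hm⟩
  choose Q hQ using hex
  have hv0 : ∀ c, v c = 0 → c = 0 := by
    intro c hc
    exact (LinearEquiv.map_eq_zero_iff b.equivFun.symm).1 hc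
  have key := card_min bR hV (Matrix.of G) (fun i j => by rw [hbR, hbR]; exact hG i j) hdet Q
    (fun c => by rw [hv, ← real_inner_self_eq_norm_sq, hQ])
    (fun c hc => by
      apply hv0
      have := hQ c
      rw [hc] at this
      simpa using this)
    (fun c hc => by
      have h := hQ c
      have h1 := hmin (v c) (v c).2 (by
        intro h0
        rw [h0, hc] at h
        simp at h)
      rw [hc] at h
      rw [Nat.cast_one] at h
      linarith)
  rw [← key]
  refine Nat.card_congr (Equiv.subtypeEquiv b.equivFun.toEquiv ?_)
  intro a
  have h := hQ (b.equivFun a)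
  have h2 : v (b.equivFun a) = a := b.equivFun.symm_apply_apply a
  rw [h2] at h
  rw [h]
  constructor
  · intro h
    have h3 : (Q (b.equivFun a) : ℝ) = 2 := by linarith
    have h4 : Q (b.equivFun a) = 2 := by exact_mod_cast h3
    simpa using h4
  · intro h
    have h4 : Q (b.equivFun a) = 2 := by simpa using h
    rw [h4]; norm_num

lemma mem_two_smul {Υ : Submodule ℤ V} {v : V} :
    v ∈ (2 : ℤ) • Υ ↔ ∃ u ∈ Υ, v = (2 : ℤ) • u := by
  rw [Submodule.mem_smul_pointwise_iff_exists]
  exact ⟨fun ⟨u, hu, h⟩ => ⟨u, hu, h.symm⟩, fun ⟨u, hu, h⟩ => ⟨u, hu, h.symm⟩⟩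

lemma card_quot (Υ N : Submodule ℤ V) (hV : finrank ℝ V = 24)
    (hΥ : Submodule.span ℝ (Υ : Set V) = ⊤) (hN : Submodule.span ℝ (N : Set V) = ⊤)
    (hu : IsUnimodularLat N) (hS : SqrtTwoEvenUnimod Υ) (hle : (2 : ℤ) • Υ ≤ N) :
    Nat.card (N ⧸ (((2 : ℤ) • Υ).comap N.subtype)) = 4096 := by
  obtain ⟨n, bN, hbN⟩ := hu
  obtain ⟨-, -, m, bU, hbU⟩ := hS
  have hbU' : (2 : ℝ) ^ m * (Matrix.of fun i j : Fin m => ⟪(bU i : V), (bU j : V)⟫).det = 1 := by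
    have h : (Matrix.of fun i j : Fin m => 2 * ⟪(bU i : V), (bU j : V)⟫) =
      (2 : ℝ) • (Matrix.of fun i j : Fin m => ⟪(bU i : V), (bU j : V)⟫) := by
      ext i j; simp
    rw [h, Matrix.det_smul] at hbU
    simpa using hbU
  obtain ⟨bR, hbR⟩ := exists_realBasis N hN bN (by rw [hbN]; norm_num)
  obtain ⟨bR', -⟩ := exists_realBasis Υ hΥ bU (by
    intro h; rw [h] at hbU'; simp at hbU')
  have hn : n = 24 := by
    have := finrank_eq_card_basis bR
    simp [hV] at this; exact this.symm
  have hm : m = 24 := by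
    have := finrank_eq_card_basis bR'
    simp [hV] at this; exact this.symm
  subst hm
  subst hn
  set K := ((2 : ℤ) • Υ).comap N.subtype with hK
  have hmem : ∀ u : Υ, (2 : ℤ) • (u : V) ∈ (2 : ℤ) • Υ := fun u => mem_two_smul.2 ⟨u, u.2, rfl⟩
  let g : Υ →ₗ[ℤ] K :=
    { toFun := fun u => ⟨⟨(2 : ℤ) • (u : V), hle (hmem u)⟩, hmem u⟩
      map_add' := fun x y => by
        apply Subtype.ext; apply Subtype.ext
        simp [smul_add]
      map_smul' := fun c x => by
        apply Subtype.ext; apply Subtype.ext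
        exact smul_comm (2 : ℤ) c (x : V) }
  have hg : ∀ u, ((g u : N) : V) = (2 : ℤ) • (u : V) := fun u => rfl
  have hbij : Function.Bijective g := by
    constructor
    · intro x y hxy
      have h : (2 : ℤ) • (x : V) = (2 : ℤ) • (y : V) := by rw [← hg, ← hg, hxy]
      rw [← Int.cast_smul_eq_zsmul ℝ, ← Int.cast_smul_eq_zsmul ℝ] at h
      exact Subtype.ext (smul_right_injective V (by norm_num) h)
    · rintro ⟨⟨k, hkN⟩, hk⟩
      obtain ⟨u, hu, h⟩ := mem_two_smul.1 (show k ∈ (2 : ℤ) • Υ from hk)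
      refine ⟨⟨u, hu⟩, ?_⟩
      apply Subtype.ext; apply Subtype.ext
      exact h.symm
  let bK : Basis (Fin 24) ℤ K := bU.map (LinearEquiv.ofBijective g hbij)
  have hbK : ∀ i, ((bK i : N) : V) = (2 : ℤ) • (bU i : V) := fun i => by
    simp only [bK, Basis.map_apply, LinearEquiv.ofBijective_apply]
    rfl
  have : Module.Free ℤ N := Module.Free.of_basis bN
  have : Module.Finite ℤ N := Module.Finite.of_basis bN
  rw [← Submodule.natAbs_det_basis_change bN K bK]
  rw [Basis.det_apply]
  set P := bN.toMatrix ((↑) ∘ bK : Fin 24 → N) with hP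
  have hPs : ∀ j, (2 : ℝ) • (bU j : V) = ∑ i, (P i j : ℝ) • (bN i : V) := by
    intro j
    have h := bN.sum_repr (bK j : N)
    have h2 := congrArg Subtype.val h
    rw [hbK] at h2
    simp only [AddSubmonoidClass.coe_finsetSum, SetLike.val_smul] at h2
    rw [← Int.cast_smul_eq_zsmul ℝ] at h2
    norm_num at h2
    rw [← h2]
    refine Finset.sum_congr rfl fun i _ => ?_
    rw [← Int.cast_smul_eq_zsmul ℝ]
    rfl
  set A := Matrix.of fun i j : Fin 24 => ⟪(bU i : V), (bU j : V)⟫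
  set B := Matrix.of fun i j : Fin 24 => ⟪(bN i : V), (bN j : V)⟫
  have hAB : (4 : ℝ) • A = (P.map (Int.castRingHom ℝ)).transpose * B * (P.map (Int.castRingHom ℝ)) := by
    ext i j
    have : ⟪(2 : ℝ) • (bU i : V), (2 : ℝ) • (bU j : V)⟫ = 4 * A i j := by
      rw [inner_smul_left, inner_smul_right]
      simp [A]; ring
    rw [Matrix.smul_apply, smul_eq_mul, ← this, hPs, hPs]
    simp only [sum_inner, inner_sum, inner_smul_left, inner_smul_right, Matrix.mul_apply,
      Finset.sum_mul, Finset.mul_sum, Matrix.transpose_apply, Matrix.map_apply]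
    refine Finset.sum_congr rfl fun x _ => Finset.sum_congr rfl fun y _ => ?_
    simp [B]; ring
  have hd := congrArg Matrix.det hAB
  rw [Matrix.det_smul, Matrix.det_mul, Matrix.det_mul, Matrix.det_transpose, hbN,
    ← RingHom.mapMatrix_apply, ← RingHom.map_det, Fintype.card_fin] at hd
  have h2 : ((P.det : ℤ) : ℝ) * (P.det : ℤ) = 4096 * 4096 := by
    have : (4 : ℝ) ^ 24 = 2 ^ 24 * (4096 * 4096) := by norm_num
    rw [this] at hd
    simp only [eq_intCast, mul_one] at hd
    rw [← hd]
    linear_combination (4096 * 4096) * hbU'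
  have h3 : P.det * P.det = 4096 * 4096 := by exact_mod_cast h2
  have h4 : P.det.natAbs * P.det.natAbs = 4096 * 4096 := by
    rw [← Int.natAbs_mul, h3]; rfl
  exact Nat.mul_self_inj.1 h4

lemma card_orth (hV : finrank ℝ V = 24) (F : Finset V) (h0 : ∀ v ∈ F, v ≠ 0)
    (ho : ∀ u ∈ F, ∀ v ∈ F, u ≠ v → ⟪u, v⟫ = 0) : F.card ≤ 24 := by
  have : Module.Finite ℝ V := Module.finite_of_finrank_pos (by omega)
  have hli : LinearIndependent ℝ (fun v : F => (v : V)) :=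
    linearIndependent_of_ne_zero_of_inner_eq_zero (fun v => h0 v v.2)
      (fun u v huv => ho u u.2 v v.2 (fun h => huv (Subtype.ext h)))
  have := hli.fintype_card_le_finrank
  simpa [hV] using this

lemma card_orth_pm (hV : finrank ℝ V = 24) (F : Finset V) (h0 : ∀ v ∈ F, v ≠ 0)
    (ho : ∀ u ∈ F, ∀ v ∈ F, u ≠ v → u ≠ -v → ⟪u, v⟫ = 0) : F.card ≤ 48 := by
  classical
  let P : V → Prop := fun v => WellOrderingRel v (-v)
  have hne : ∀ v ∈ F, v ≠ -v := fun v hv h => h0 v hv (by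
    have h2 : (2 : ℝ) • v = 0 := by
      rw [two_smul]; nth_rewrite 2 [h]; exact add_neg_cancel v
    exact (smul_eq_zero.1 h2).resolve_left (by norm_num))
  have h1 := card_orth hV (F.filter P) (fun v hv => h0 v (Finset.mem_filter.1 hv).1)
    (fun u hu v hv huv => by
      rw [Finset.mem_filter] at hu hv
      refine ho u hu.1 v hv.1 huv fun h => ?_
      have h3 := hu.2
      have h4 := hv.2
      simp only [P, h, neg_neg] at h3 h4
      exact asymm_of WellOrderingRel h3 h4)
  have h2 := card_orth hV (F.filter fun v => ¬ P v) (fun v hv => h0 v (Finset.mem_filter.1 hv).1)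
    (fun u hu v hv huv => by
      rw [Finset.mem_filter] at hu hv
      refine ho u hu.1 v hv.1 huv fun h => ?_
      have h3 := hu.2
      have h4 := hv.2
      simp only [P, h, neg_neg] at h3 h4
      rcases trichotomous_of WellOrderingRel v (-v) with h | h | h
      · exact h4 h
      · exact hne v hv.1 h
      · exact h3 h)
  have := Finset.card_filter_add_card_filter_not (s := F) P
  omega

/-- Every nonzero class of `N / 2Υ` contains a vector of norm 4. -/
lemma exists_norm_four (Υ N : Submodule ℤ V) (hV : finrank ℝ V = 24)
    (hΥ : Submodule.span ℝ (Υ : Set V) = ⊤) (hN : Submodule.span ℝ (N : Set V) = ⊤)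
    (he : IsEvenLat N) (hu : IsUnimodularLat N) (hS : SqrtTwoEvenUnimod Υ)
    (hle : (2 : ℤ) • Υ ≤ N) (hNU : N ≤ Υ)
    (hmin : ∀ v ∈ N, v ≠ 0 → 4 ≤ ⟪v, v⟫)
    (hmin2 : ∀ v ∈ (2 : ℤ) • Υ, v ≠ 0 → 8 ≤ ⟪v, v⟫)
    (s : V) (hs : s ∈ N) (hs2 : s ∉ (2 : ℤ) • Υ) :
    ∃ w ∈ N, w - s ∈ (2 : ℤ) • Υ ∧ ⟪w, w⟫ = 4 := by
  classical
  by_contra! hno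
  have hc := card_norm_four N hV hN he hu hmin
  have hq := card_quot Υ N hV hΥ hN hu hS hle
  set K := ((2 : ℤ) • Υ).comap N.subtype with hK
  have : Finite {v : N // ⟪(v : V), (v : V)⟫ = 4} := Nat.finite_of_card_ne_zero (by rw [hc]; norm_num)
  have : Finite (N ⧸ K) := Nat.finite_of_card_ne_zero (by rw [hq]; norm_num)
  have := Fintype.ofFinite {v : N // ⟪(v : V), (v : V)⟫ = 4}
  have := Fintype.ofFinite (N ⧸ K)
  rw [Nat.card_eq_fintype_card] at hc hq
  let f : {v : N // ⟪(v : V), (v : V)⟫ = 4} → N ⧸ K := fun v => K.mkQ v.1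
  have hfeq : ∀ u v, f u = f v → ((u.1 : V) - (v.1 : V)) ∈ (2 : ℤ) • Υ := by
    intro u v huv
    exact (Submodule.Quotient.eq K).1 huv
  have himg : (Finset.univ.image f) ⊆ (Finset.univ.erase (K.mkQ ⟨s, hs⟩)).erase 0 := by
    intro q hq
    obtain ⟨v, -, rfl⟩ := Finset.mem_image.1 hq
    rw [Finset.mem_erase, Finset.mem_erase]
    refine ⟨?_, ?_, Finset.mem_univ _⟩
    · intro h
      have h2 : v.1 ∈ K := (Submodule.Quotient.mk_eq_zero K).1 h
      have h3 := hmin2 (v.1 : V) h2 (by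
        intro h0
        have := v.2
        rw [h0] at this
        simp at this)
      rw [v.2] at h3
      norm_num at h3
    · intro h
      have h2 := (Submodule.Quotient.eq K).1 h
      exact hno v.1 v.1.2 h2 v.2
  have hcard : (Finset.univ.image f).card ≤ 4094 := by
    refine (Finset.card_le_card himg).trans ?_
    rw [Finset.card_erase_of_mem, Finset.card_erase_of_mem (Finset.mem_univ _), Finset.card_univ, hq]
    rw [Finset.mem_erase]
    refine ⟨fun h => hs2 ?_, Finset.mem_univ _⟩
    have h2 : (⟨s, hs⟩ : N) ∈ K := (Submodule.Quotient.mk_eq_zero K).1 h.symm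
    exact h2
  have hfib : ∀ q ∈ Finset.univ.image f, (Finset.univ.filter fun v => f v = q).card ≤ 48 := by
    intro q _
    rw [← Finset.card_image_of_injective (f := fun v : {v : N // ⟪(v : V), (v : V)⟫ = 4} => ((v.1 : N) : V))
      _ (fun a b h => Subtype.ext (Subtype.ext h))]
    apply card_orth_pm hV
    · intro v hv h0
      obtain ⟨v, -, rfl⟩ := Finset.mem_image.1 hv
      have := v.2
      rw [h0] at this
      simp at this
    · intro u hu v hv huv huv'
      obtain ⟨u, hu1, rfl⟩ := Finset.mem_image.1 hu
      obtain ⟨v, hv1, rfl⟩ := Finset.mem_image.1 hv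
      rw [Finset.mem_filter] at hu1 hv1
      have h1 := hfeq u v (hu1.2.trans hv1.2.symm)
      have h2 : ((u.1 : V) + (v.1 : V)) ∈ (2 : ℤ) • Υ := by
        obtain ⟨t, ht, ht'⟩ := mem_two_smul.1 h1
        have hvU : (2 : ℤ) • (v.1 : V) ∈ (2 : ℤ) • Υ := by
          exact mem_two_smul.2 ⟨_, hNU v.1.2, rfl⟩
        have : (u.1 : V) + (v.1 : V) = ((u.1 : V) - v.1) + (2 : ℤ) • (v.1 : V) := by
          rw [two_smul]; abel
        rw [this]
        exact Submodule.add_mem _ h1 hvU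
      have h3 := hmin2 _ h1 (sub_ne_zero.2 huv)
      have h4 := hmin2 _ h2 (fun h => huv' (eq_neg_of_add_eq_zero_left h))
      rw [real_inner_sub_sub_self, u.2, v.2] at h3
      rw [real_inner_add_add_self, u.2, v.2] at h4
      linarith
  have := Finset.card_le_mul_card_image (s := Finset.univ) (f := f) 48 hfib
  rw [Finset.card_univ, hc] at this
  omega

end Counting

section Offenders

/-- The facts about a Leech polarization used in the combinatorial argument. -/
structure PolFacts (U M N D : Submodule ℤ V) : Prop where
  hMU : M ≤ U
  hNU : N ≤ U
  hMN : M ⊓ N = D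
  minU : ∀ v ∈ U, v ≠ 0 → 2 ≤ ⟪v, v⟫
  intU : ∀ v ∈ U, ∃ n : ℤ, ⟪v, v⟫ = n
  minM : ∀ v ∈ M, v ≠ 0 → 4 ≤ ⟪v, v⟫
  minN : ∀ v ∈ N, v ≠ 0 → 4 ≤ ⟪v, v⟫
  minD : ∀ v ∈ D, v ≠ 0 → 8 ≤ ⟪v, v⟫
  evM : ∀ v ∈ M, ∃ n : ℤ, ⟪v, v⟫ = 2 * n
  evN : ∀ v ∈ N, ∃ n : ℤ, ⟪v, v⟫ = 2 * n
  intN : ∀ v ∈ N, ∀ u ∈ N, ∃ n : ℤ, ⟪v, u⟫ = n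
  evD : ∀ v ∈ D, ∃ n : ℤ, ⟪v, v⟫ = 4 * n
  two : ∀ v ∈ U, v + v ∈ D
  rep : ∀ s ∈ N, s ∉ D → ∃ w ∈ N, w - s ∈ D ∧ ⟪w, w⟫ = 4

variable {U M N D : Submodule ℤ V}

lemma PolFacts.hDM (F : PolFacts U M N D) : D ≤ M := F.hMN ▸ inf_le_left
lemma PolFacts.hDN (F : PolFacts U M N D) : D ≤ N := F.hMN ▸ inf_le_right

lemma ne_zero_of_inner {v : V} {r : ℝ} (h : ⟪v, v⟫ = r) (hr : r ≠ 0) : v ≠ 0 := by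
  rintro rfl
  rw [inner_zero_left] at h
  exact hr h.symm

lemma pair_orth (F : PolFacts U M N D) {a b : V} (hb : b ∈ U)
    (ha2 : ⟪a, a⟫ = 2) (hb2 : ⟪b, b⟫ = 2) (hab : a - b ∈ M) (h1 : a - b ≠ 0) (h2 : a + b ≠ 0) :
    ⟪a, b⟫ = 0 := by
  have hp : a + b ∈ M := by
    have : a + b = (a - b) + (b + b) := by abel
    rw [this]
    exact M.add_mem hab (F.hDM (F.two b hb))
  have h3 := F.minM _ hab h1
  have h4 := F.minM _ hp h2
  rw [real_inner_sub_sub_self] at h3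
  rw [real_inner_add_add_self] at h4
  linarith

/-- inner products of a norm 4 vector with a norm 2 vector in the same class mod `M`. -/
lemma ip_bound (F : PolFacts U M N D) {w a : V} (ha : a ∈ U)
    (hw4 : ⟪w, w⟫ = 4) (ha2 : ⟪a, a⟫ = 2) (hwa : w - a ∈ M) :
    ∃ t : ℤ, ⟪w, a⟫ = t ∧ -1 ≤ t ∧ t ≤ 1 := by
  have hp : w + a ∈ M := by
    have : w + a = (w - a) + (a + a) := by abel
    rw [this]
    exact M.add_mem hwa (F.hDM (F.two a ha))
  have hne1 : w - a ≠ 0 := by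
    intro h
    rw [sub_eq_zero.1 h] at hw4
    linarith
  have hne2 : w + a ≠ 0 := by
    intro h
    rw [eq_neg_of_add_eq_zero_left h, inner_neg_neg] at hw4
    linarith
  have h3 := F.minM _ hwa hne1
  have h4 := F.minM _ hp hne2
  obtain ⟨m, hm⟩ := F.evM _ hwa
  rw [real_inner_sub_sub_self] at h3 hm
  rw [real_inner_add_add_self] at h4
  refine ⟨3 - m, by push_cast; linarith, ?_, ?_⟩
  · have : (-1 : ℝ) ≤ 3 - m := by linarith
    exact_mod_cast this
  · have : (3 - m : ℝ) ≤ 1 := by linarith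
    exact_mod_cast this

lemma flip_sign (F : PolFacts U M N D) {w a : V} (ha : a ∈ U) (ha2 : ⟪a, a⟫ = 2)
    (h : ⟪w, a⟫ = 1 ∨ ⟪w, a⟫ = -1) :
    ∃ a' ∈ U, ⟪a', a'⟫ = 2 ∧ a - a' ∈ D ∧ ⟪w, a'⟫ = 1 ∧ (∀ v, ⟪a, v⟫ = 0 → ⟪a', v⟫ = 0) := by
  rcases h with h | h
  · exact ⟨a, ha, ha2, by rw [sub_self]; exact D.zero_mem, h, fun v hv => hv⟩
  · refine ⟨-a, U.neg_mem ha, by rw [inner_neg_neg, ha2], by rw [sub_neg_eq_add]; exact F.two a ha,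
      by rw [inner_neg_right, h, neg_neg], fun v hv => by rw [inner_neg_left, hv, neg_zero]⟩

lemma no_three (F : PolFacts U M N D) {w a b c : V}
    (ha2 : ⟪a, a⟫ = 2) (hb2 : ⟪b, b⟫ = 2) (hc2 : ⟪c, c⟫ = 2) (hw4 : ⟪w, w⟫ = 4)
    (hab : ⟪a, b⟫ = 0) (hac : ⟪a, c⟫ = 0) (hbc : ⟪b, c⟫ = 0)
    (hwa : ⟪w, a⟫ = 1) (hwb : ⟪w, b⟫ = 1) (hwc : ⟪w, c⟫ = 1)
    (hD : w - (a + b + c) ∈ D) : False := by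
  have hn : ⟪w - (a + b + c), w - (a + b + c)⟫ = 4 := by
    simp only [inner_sub_left, inner_sub_right, inner_add_left, inner_add_right,
      real_inner_comm w a, real_inner_comm w b, real_inner_comm w c, real_inner_comm a b,
      real_inner_comm a c, real_inner_comm b c, hab, hac, hbc, hwa, hwb, hwc, ha2, hb2, hc2, hw4]
    norm_num
  have := F.minD _ hD (ne_zero_of_inner hn (by norm_num))
  linarith

lemma super_of (F : PolFacts U M N D) {w a b c : V} (hw : w ∈ N) (hc : c ∈ U)
    (ha2 : ⟪a, a⟫ = 2) (hb2 : ⟪b, b⟫ = 2) (hc2 : ⟪c, c⟫ = 2) (hw4 : ⟪w, w⟫ = 4)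
    (hwa' : w - a ∈ M) (hwb' : w - b ∈ M) (hwc' : w - c ∈ M)
    (hwa : ⟪w, a⟫ = 0) (hwb : ⟪w, b⟫ = 0) (hwc : ⟪w, c⟫ = 1 ∨ ⟪w, c⟫ = -1)
    (hD : w - (a + b + c) ∈ D) : ∃ w x y z : V, SuperOffender M N w x y z := by
  obtain ⟨d, hd, hd2, hcd, hwd, -⟩ := flip_sign F hc hc2 hwc
  refine ⟨w, a - w, b - w, d - w, ⟨⟨hw, ?_, ?_, ?_, ?_⟩, ?_, ?_, ?_⟩, hw4, ?_⟩
  · rw [← neg_sub]; exact M.neg_mem hwa'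
  · rw [← neg_sub]; exact M.neg_mem hwb'
  · have : d - w = -((w - c) + (c - d)) := by abel
    rw [this]
    exact M.neg_mem (M.add_mem hwc' (F.hDM hcd))
  · rw [F.hMN]
    have : a - w + (b - w) + (d - w) = -((w - (a + b + c)) + (c - d) + (w + w)) := by abel
    rw [this]
    exact D.neg_mem (D.add_mem (D.add_mem hD hcd) (F.two w (F.hNU hw)))
  · rw [add_sub_cancel]; exact ha2
  · rw [add_sub_cancel]; exact hb2
  · rw [add_sub_cancel]; exact hd2
  · rw [real_inner_sub_sub_self, real_inner_sub_sub_self, real_inner_sub_sub_self,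
      real_inner_comm w a, hwa, real_inner_comm w b, hwb, real_inner_comm w d, hwd, ha2, hb2, hd2, hw4]
    norm_num

lemma super_of_offender (F : PolFacts U M N D) {w x y z : V} (h : Offender M N w x y z) :
    ∃ w x y z : V, SuperOffender M N w x y z := by
  obtain ⟨⟨hw, hx, hy, hz, hs⟩, h2x, h2y, h2z⟩ := h
  rw [F.hMN] at hs
  have hwU := F.hNU hw
  have aU : w + x ∈ U := U.add_mem hwU (F.hMU hx)
  have bU : w + y ∈ U := U.add_mem hwU (F.hMU hy)
  have cU : w + z ∈ U := U.add_mem hwU (F.hMU hz)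
  -- orthogonality
  have gen : ∀ x ∈ M, ∀ y ∈ M, ∀ z ∈ M, x + y + z ∈ D → ⟪w + x, w + x⟫ = 2 → ⟪w + y, w + y⟫ = 2 →
      ⟪w + z, w + z⟫ = 2 → ⟪w + x, w + y⟫ = 0 := by
    intro x hx y hy z hz hs h2x h2y h2z
    have xU := F.hMU hx
    have yU := F.hMU hy
    have key : ∀ d ∈ D, w + z = w + d → False := by
      intro d hd h
      have hmem : w + z ∈ N := by rw [h]; exact N.add_mem hw (F.hDN hd)
      have := F.minN _ hmem (ne_zero_of_inner h2z (by norm_num))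
      linarith
    refine pair_orth F (U.add_mem hwU yU) h2x h2y ?_ ?_ ?_
    · rw [add_sub_add_left_eq_sub]; exact M.sub_mem hx hy
    · intro h
      rw [add_sub_add_left_eq_sub, sub_eq_zero] at h
      subst h
      refine key _ (D.sub_mem hs (F.two x xU)) ?_
      abel
    · intro h
      refine key (x + y + z - ((w + x) + (w + y)) + (w + w)) ?_ ?_
      · rw [h, sub_zero]; exact D.add_mem hs (F.two w hwU)
      · abel
  have hab := gen x hx y hy z hz hs h2x h2y h2z
  have hac := gen x hx z hz y hy (by rwa [add_right_comm]) h2x h2z h2y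
  have hbc := gen y hy z hz x hx (by rwa [add_comm, ← add_assoc]) h2y h2z h2x
  have hsw : (w + x) + (w + y) + (w + z) - w ∈ D := by
    have : (w + x) + (w + y) + (w + z) - w = (x + y + z) + (w + w) := by abel
    rw [this]
    exact D.add_mem hs (F.two w hwU)
  have hsN : (w + x) + (w + y) + (w + z) ∈ N := by
    have := N.add_mem (F.hDN hsw) hw
    rwa [sub_add_cancel] at this
  have hsD : (w + x) + (w + y) + (w + z) ∉ D := by
    intro hD
    have hwD : w ∈ D := by
      have := D.sub_mem hD hsw
      rwa [sub_sub_cancel] at this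
    have := F.minM _ (M.add_mem (F.hDM hwD) hx) (ne_zero_of_inner h2x (by norm_num))
    linarith
  obtain ⟨v, hvN, hvs, hv4⟩ := F.rep _ hsN hsD
  have hvw : v - w ∈ D := by
    have := D.add_mem hvs hsw
    rwa [sub_add_sub_cancel] at this
  have hva : ∀ x ∈ M, v - (w + x) ∈ M := fun x hx => by
    rw [← sub_sub]; exact M.sub_mem (F.hDM hvw) hx
  obtain ⟨p, hp, hp1, hp2⟩ := ip_bound F aU hv4 h2x (hva x hx)
  obtain ⟨q, hq, hq1, hq2⟩ := ip_bound F bU hv4 h2y (hva y hy)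
  obtain ⟨r, hr, hr1, hr2⟩ := ip_bound F cU hv4 h2z (hva z hz)
  obtain ⟨m, hm⟩ := F.evD _ hvs
  have hxv := hva x hx
  have hyv := hva y hy
  have hzv := hva z hz
  generalize w + x = a at *
  generalize w + y = b at *
  generalize w + z = c at *
  have hpar : p + q + r = 5 - 2 * m := by
    simp only [inner_sub_left, inner_sub_right, inner_add_left, inner_add_right,
      real_inner_comm v a, real_inner_comm v b, real_inner_comm v c, real_inner_comm a b,
      real_inner_comm a c, real_inner_comm b c, hab, hac, hbc, hp, hq, hr, h2x, h2y, h2z, hv4] at hm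
    have : (p + q + r : ℝ) = 5 - 2 * m := by linarith
    exact_mod_cast this
  have cast1 : ∀ t : ℤ, (t = 1 ∨ t = -1) → ((t : ℝ) = 1 ∨ (t : ℝ) = -1) := by
    rintro t (rfl | rfl) <;> simp
  have cases4 : ((p = 1 ∨ p = -1) ∧ (q = 1 ∨ q = -1) ∧ (r = 1 ∨ r = -1)) ∨
      (p = 0 ∧ q = 0 ∧ (r = 1 ∨ r = -1)) ∨ (p = 0 ∧ (q = 1 ∨ q = -1) ∧ r = 0) ∨
      ((p = 1 ∨ p = -1) ∧ q = 0 ∧ r = 0) := by omega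
  rcases cases4 with ⟨h1, h2, h3⟩ | ⟨h1, h2, h3⟩ | ⟨h1, h2, h3⟩ | ⟨h1, h2, h3⟩
  · exfalso
    obtain ⟨a', -, ha2, haD, hva', hao⟩ := flip_sign F aU h2x (hp ▸ cast1 p h1)
    obtain ⟨b', -, hb2, hbD, hvb', hbo⟩ := flip_sign F bU h2y (hq ▸ cast1 q h2)
    obtain ⟨c', -, hc2, hcD, hvc', hco⟩ := flip_sign F cU h2z (hr ▸ cast1 r h3)
    refine no_three F ha2 hb2 hc2 hv4 ?_ ?_ ?_ hva' hvb' hvc' ?_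
    · apply hao; rw [real_inner_comm]; apply hbo; rw [real_inner_comm]; exact hab
    · apply hao; rw [real_inner_comm]; apply hco; rw [real_inner_comm]; exact hac
    · apply hbo; rw [real_inner_comm]; apply hco; rw [real_inner_comm]; exact hbc
    · have : v - (a' + b' + c') = v - (a + b + c) + (a - a') + (b - b') + (c - c') := by abel
      rw [this]
      exact D.add_mem (D.add_mem (D.add_mem hvs haD) hbD) hcD
  · exact super_of F hvN cU h2x h2y h2z hv4 hxv hyv hzv (by rw [hp, h1, Int.cast_zero])
      (by rw [hq, h2, Int.cast_zero]) (hr ▸ cast1 r h3) hvs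
  · exact super_of F hvN bU h2x h2z h2y hv4 hxv hzv hyv (by rw [hp, h1, Int.cast_zero])
      (by rw [hr, h3, Int.cast_zero]) (hq ▸ cast1 q h2) (by rwa [add_right_comm])
  · exact super_of F hvN aU h2y h2z h2x hv4 hyv hzv hxv (by rw [hq, h2, Int.cast_zero])
      (by rw [hr, h3, Int.cast_zero]) (hp ▸ cast1 p h1) (by rwa [add_comm (b + c), ← add_assoc])

lemma mem_LMN {v : PiLp 2 fun _ : Fin 3 => V} :
    v ∈ LMN M N 3 ↔ ∃ w x y z, Admissible M N w x y z ∧ v 0 = w + x ∧ v 1 = w + y ∧ v 2 = w + z := by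
  unfold LMN
  rw [Submodule.mem_sup]
  constructor
  · rintro ⟨p, ⟨hp, hps⟩, q, ⟨w, hw, hq⟩, rfl⟩
    rw [Fin.sum_univ_three] at hps
    exact ⟨w, p 0, p 1, p 2, ⟨hw, hp 0, hp 1, hp 2, hps⟩,
      by rw [PiLp.add_apply, hq, add_comm], by rw [PiLp.add_apply, hq, add_comm],
      by rw [PiLp.add_apply, hq, add_comm]⟩
  · rintro ⟨w, x, y, z, ⟨hw, hx, hy, hz, hs⟩, h0, h1, h2⟩
    refine ⟨WithLp.toLp 2 ![x, y, z], ⟨?_, ?_⟩, WithLp.toLp 2 (fun _ => w), ⟨w, hw, fun _ => rfl⟩, ?_⟩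
    · intro i; fin_cases i
      · exact hx
      · exact hy
      · exact hz
    · rw [Fin.sum_univ_three]; exact hs
    · ext i; fin_cases i
      · rw [add_comm] at h0; exact h0.symm
      · rw [add_comm] at h1; exact h1.symm
      · rw [add_comm] at h2; exact h2.symm

lemma inner_LMN (v : PiLp 2 fun _ : Fin 3 => V) :
    ⟪v, v⟫ = ⟪v 0, v 0⟫ + ⟪v 1, v 1⟫ + ⟪v 2, v 2⟫ := by
  rw [PiLp.inner_apply, Fin.sum_univ_three]

/-- If a coordinate is zero, the norm is at least 8. -/
lemma ge_eight_of_zero (F : PolFacts U M N D) {w x y z : V} (h : Admissible M N w x y z)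
    (h0 : w + x = 0) (hne : w + y ≠ 0 ∨ w + z ≠ 0) :
    8 ≤ ⟪w + y, w + y⟫ + ⟪w + z, w + z⟫ := by
  obtain ⟨hw, hx, hy, hz, hs⟩ := h
  have hwM : w ∈ M := by
    rw [eq_neg_of_add_eq_zero_left h0]; exact M.neg_mem hx
  have hwD : w ∈ D := by rw [← F.hMN]; exact ⟨hwM, hw⟩
  rw [F.hMN] at hs
  have hyM := M.add_mem hwM hy
  have hzM := M.add_mem hwM hz
  have hsum : (w + y) + (w + z) ∈ D := by
    have : (w + y) + (w + z) = (x + y + z) + w + w + w - (w + x) := by abel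
    rw [this, h0, sub_zero]
    exact D.add_mem (D.add_mem (D.add_mem hs hwD) hwD) hwD
  by_cases hy0 : w + y = 0
  · rw [hy0, zero_add] at hsum
    have := F.minD _ hsum (hne.resolve_left (fun h => h hy0))
    rw [hy0, inner_zero_left]
    linarith
  · by_cases hz0 : w + z = 0
    · rw [hz0, add_zero] at hsum
      have := F.minD _ hsum hy0
      rw [hz0, inner_zero_left]
      linarith
    · have h1 := F.minM _ hyM hy0
      have h2 := F.minM _ hzM hz0
      linarith

lemma dichotomy (F : PolFacts U M N D) {w x y z : V} (h : Admissible M N w x y z)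
    (hne : w + x ≠ 0 ∨ w + y ≠ 0 ∨ w + z ≠ 0) :
    8 ≤ ⟪w + x, w + x⟫ + ⟪w + y, w + y⟫ + ⟪w + z, w + z⟫ ∨
    (⟪w + x, w + x⟫ + ⟪w + y, w + y⟫ + ⟪w + z, w + z⟫ = 6 ∧ Offender M N w x y z) := by
  have h' := h
  obtain ⟨hw, hx, hy, hz, hs⟩ := h
  by_cases hx0 : w + x = 0
  · left
    have := ge_eight_of_zero F h' hx0 (hne.resolve_left (fun h => h hx0))
    rw [hx0, inner_zero_left]; linarith
  by_cases hy0 : w + y = 0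
  · left
    have := ge_eight_of_zero (x := y) (y := x) (z := z) F ⟨hw, hy, hx, hz, by rwa [add_comm y x]⟩ hy0 (Or.inl hx0)
    rw [hy0, inner_zero_left]; linarith
  by_cases hz0 : w + z = 0
  · left
    have := ge_eight_of_zero (x := z) (y := x) (z := y) F ⟨hw, hz, hx, hy, by rwa [add_assoc, add_comm]⟩ hz0 (Or.inl hx0)
    rw [hz0, inner_zero_left]; linarith
  have hwU := F.hNU hw
  have h1 := F.minU _ (U.add_mem hwU (F.hMU hx)) hx0
  have h2 := F.minU _ (U.add_mem hwU (F.hMU hy)) hy0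
  have h3 := F.minU _ (U.add_mem hwU (F.hMU hz)) hz0
  obtain ⟨k1, hk1⟩ := F.evM _ hx
  obtain ⟨k2, hk2⟩ := F.evM _ hy
  obtain ⟨k3, hk3⟩ := F.evM _ hz
  obtain ⟨k4, hk4⟩ := F.evN _ hw
  obtain ⟨k5, hk5⟩ := F.intN _ hw _ hs.2
  have hev : ⟪w + x, w + x⟫ + ⟪w + y, w + y⟫ + ⟪w + z, w + z⟫ =
      2 * ((k1 + k2 + k3 + 3 * k4 + k5 : ℤ) : ℝ) := by
    rw [inner_add_right, inner_add_right] at hk5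
    rw [real_inner_add_add_self, real_inner_add_add_self, real_inner_add_add_self]
    push_cast
    linarith
  by_cases h8 : 8 ≤ ⟪w + x, w + x⟫ + ⟪w + y, w + y⟫ + ⟪w + z, w + z⟫
  · exact Or.inl h8
  right
  have hlt : k1 + k2 + k3 + 3 * k4 + k5 < 4 := by
    have : ((k1 + k2 + k3 + 3 * k4 + k5 : ℤ) : ℝ) < 4 := by linarith
    exact_mod_cast this
  have hle : ((k1 + k2 + k3 + 3 * k4 + k5 : ℤ) : ℝ) ≤ 3 := by
    have : k1 + k2 + k3 + 3 * k4 + k5 ≤ 3 := by omega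
    exact_mod_cast this
  exact ⟨by linarith, h', by linarith, by linarith, by linarith⟩

lemma exists_norm_four_of_minNorm (L : Submodule ℤ V) (he : ∀ v ∈ L, ∃ n : ℤ, ⟪v, v⟫ = 2 * n)
    (h4 : minNorm L = 4) : ∃ v ∈ L, ⟪v, v⟫ = 4 := by
  by_contra! hno
  set S := {r : ℝ | ∃ x ∈ L, x ≠ 0 ∧ ⟪x, x⟫ = r} with hS
  have hmin : sInf S = 4 := h4
  have hbdd : BddBelow S := ⟨0, by rintro r ⟨x, -, -, rfl⟩; exact real_inner_self_nonneg⟩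
  have hne : S.Nonempty := by
    rw [Set.nonempty_iff_ne_empty]
    intro h
    rw [h, Real.sInf_empty] at hmin
    norm_num at hmin
  have : 6 ≤ sInf S := by
    apply le_csInf hne
    rintro r ⟨x, hx, hx0, rfl⟩
    have hge : 4 ≤ ⟪x, x⟫ := by
      rw [← hmin]; exact csInf_le hbdd ⟨x, hx, hx0, rfl⟩
    obtain ⟨n, hn⟩ := he x hx
    have h1 : ⟪x, x⟫ ≠ 4 := hno x hx
    rw [hn] at hge h1 ⊢
    have h2 : n ≥ 2 := by
      have : (2 : ℝ) ≤ n := by linarith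
      exact_mod_cast this
    have h3 : n ≠ 2 := by
      rintro rfl
      norm_num at h1
    have h4 : (3 : ℝ) ≤ n := by
      have : 3 ≤ n := by omega
      exact_mod_cast this
    linarith
  linarith

lemma minNorm_le (L : Submodule ℤ V) (v : V) (hv : v ∈ L) (h0 : v ≠ 0) :
    minNorm L ≤ ⟪v, v⟫ :=
  csInf_le ⟨0, by rintro r ⟨x, -, -, rfl⟩; exact real_inner_self_nonneg⟩ ⟨v, hv, h0, rfl⟩

lemma minNorm_eq (L : Submodule ℤ V) (r : ℝ) (hr : r ≠ 0) (v : V) (hv : v ∈ L) (hvr : ⟪v, v⟫ = r)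
    (h : ∀ u ∈ L, u ≠ 0 → r ≤ ⟪u, u⟫) : minNorm L = r := by
  have h0 := ne_zero_of_inner hvr hr
  apply le_antisymm
  · rw [← hvr]; exact minNorm_le L v hv h0
  · unfold minNorm
    refine le_csInf ⟨r, v, hv, h0, hvr⟩ ?_
    rintro s ⟨u, hu, hu0, rfl⟩
    exact h u hu hu0

lemma polFacts_of_setup (Υ M N : Submodule ℤ V) (h : LeechSetup Υ M N) :
    PolFacts Υ M N ((2 : ℤ) • Υ) := by
  obtain ⟨hV, hU, hS, hU4, ⟨hMU, hNU, -, hNi, -, hMN⟩, hM, heM, huM, hmM, hN, heN, huN, hmN⟩ := h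
  have hDN : (2 : ℤ) • Υ ≤ N := hMN ▸ inf_le_right
  have minN : ∀ v ∈ N, v ≠ 0 → 4 ≤ ⟪v, v⟫ := fun v hv h0 => hmN ▸ minNorm_le N v hv h0
  have hsq : ∀ u : V, ⟪(2 : ℤ) • u, (2 : ℤ) • u⟫ = 4 * ⟪u, u⟫ := by
    intro u
    rw [two_smul, real_inner_add_add_self]; ring
  have minD : ∀ v ∈ (2 : ℤ) • Υ, v ≠ 0 → 8 ≤ ⟪v, v⟫ := by
    intro v hv h0
    obtain ⟨u, hu, rfl⟩ := mem_two_smul.1 hv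
    have := hU4 u hu (by rintro rfl; exact h0 (smul_zero _))
    rw [hsq]; linarith
  exact
    { hMU := hMU
      hNU := hNU
      hMN := hMN
      minU := fun v hv h0 => by have := hU4 v hv h0; linarith
      intU := hS.1
      minM := fun v hv h0 => hmM ▸ minNorm_le M v hv h0
      minN := minN
      minD := minD
      evM := heM.2
      evN := heN.2
      intN := hNi
      evD := by
        intro v hv
        obtain ⟨u, hu, rfl⟩ := mem_two_smul.1 hv
        obtain ⟨n, hn⟩ := hS.1 u hu
        exact ⟨n, by rw [hsq, hn]⟩
      two := fun v hv => mem_two_smul.2 ⟨v, hv, (two_smul ℤ v).symm⟩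
      rep := fun s hs hs2 => exists_norm_four Υ N hV hU.2 hN.2 heN huN hS hDN hNU minN minD s hs hs2 }

end Offenders

/-- in the Leech polarization setup, `μ(L(M,N,3))` is 6 if a super offender
exists, and 8 otherwise. -/
theorem statement16 (Υ M N : Submodule ℤ V) (h : LeechSetup Υ M N) :
    ((∃ w x y z : V, SuperOffender M N w x y z) → minNorm (LMN M N 3) = 6) ∧
    ((¬ ∃ w x y z : V, SuperOffender M N w x y z) → minNorm (LMN M N 3) = 8) := by
  have F := polFacts_of_setup Υ M N h
  have hmM : minNorm M = 4 := h.2.2.2.2.2.2.2.2.1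
  have di : ∀ u ∈ LMN M N 3, u ≠ 0 → 8 ≤ ⟪u, u⟫ ∨ (⟪u, u⟫ = 6 ∧ ∃ w x y z, Offender M N w x y z) := by
    intro u hu h0
    obtain ⟨w, x, y, z, hadm, e0, e1, e2⟩ := mem_LMN.1 hu
    have hne : w + x ≠ 0 ∨ w + y ≠ 0 ∨ w + z ≠ 0 := by
      by_contra! hall
      apply h0
      ext i
      fin_cases i
      · exact e0.trans hall.1
      · exact e1.trans hall.2.1
      · exact e2.trans hall.2.2
    rw [inner_LMN, e0, e1, e2]
    rcases dichotomy F hadm hne with h | h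
    · exact Or.inl h
    · exact Or.inr ⟨h.1, w, x, y, z, h.2⟩
  constructor
  · rintro ⟨w, x, y, z, ⟨hadm, h1, h2, h3⟩, -, -⟩
    refine minNorm_eq _ 6 (by norm_num) (WithLp.toLp 2 ![w + x, w + y, w + z])
      (mem_LMN.2 ⟨w, x, y, z, hadm, rfl, rfl, rfl⟩) ?_ ?_
    · rw [inner_LMN]
      change ⟪w + x, w + x⟫ + ⟪w + y, w + y⟫ + ⟪w + z, w + z⟫ = 6
      rw [h1, h2, h3]; norm_num
    · intro u hu h0
      rcases di u hu h0 with h | h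
      · linarith
      · exact h.1.ge
  · intro hno
    obtain ⟨x, hx, hx4⟩ := exists_norm_four_of_minNorm M F.evM hmM
    refine minNorm_eq _ 8 (by norm_num) (WithLp.toLp 2 ![x, -x, 0])
      (mem_LMN.2 ⟨0, x, -x, 0, ⟨N.zero_mem, hx, M.neg_mem hx, M.zero_mem, ?_⟩,
        (zero_add _).symm, (zero_add _).symm, (zero_add _).symm⟩) ?_ ?_
    · rw [add_neg_cancel, zero_add]; exact (M ⊓ N).zero_mem
    · rw [inner_LMN]
      change ⟪x, x⟫ + ⟪-x, -x⟫ + ⟪(0 : V), 0⟫ = 8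
      rw [inner_neg_neg, hx4, inner_zero_left]; norm_num
    · intro u hu h0
      rcases di u hu h0 with h | ⟨-, w, x, y, z, h⟩
      · exact h
      · exact absurd (super_of_offender F h) hno
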